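/- For all m, n ≥ 0 and all indices i_1,…,i_m, i, j, j_1,…,j_n ∈ {1,…,2d}, the following equality holds in W: ε(x_{i_1}⋯x_{i_m} [x_i, x_j, x_{j_1},…,x_{j_n}]) = (0, (v_j·a_i − v_i·a_j)·v_{j_1}⋯v_{j_n}·u_{i_1}⋯u_{i_m}), where the dot denotes scalar multiplication in the S-module M. -/

import Mathlib

open MvPolynomial

namespace Stmt5

/-- Index type for `{1, …, 2d}`: the pair `(i, 0)` stands for the index `2i-1` and
`(i, 1)` for the index `2i`. -/
abbrev ι (d : ℕ) : Type := Fin d × Fin 2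

/-- The free unital associative algebra `P = K⟨x_1, …, x_{2d}⟩`. -/
abbrev P (K : Type) [Field K] (d : ℕ) : Type := FreeAlgebra K (ι d)

/-- The relation whose `RingQuot` is the free metabelian associative algebra
`F = P/T`. -/
def metaRel (K : Type) [Field K] (d : ℕ) : P K d → P K d → Prop := fun p q =>
  q = 0 ∧ ∃ a b c e : P K d, p = (a * b - b * a) * (c * e - e * c)

/-- The free metabelian associative algebra `F = P/T` of rank `2d`. -/
abbrev F (K : Type) [Field K] (d : ℕ) : Type := RingQuot (metaRel K d)

/-- The two-sided ideal `T = P'·P' ⊆ P` generated by all products of two commutators. -/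
noncomputable def T (K : Type) [Field K] (d : ℕ) : TwoSidedIdeal (P K d) :=
  TwoSidedIdeal.span {p : P K d |
    ∃ a b c e : P K d, p = (a * b - b * a) * (c * e - e * c)}

/-- The polynomial ring `R = K[y_1, …, y_{2d}]`. -/
abbrev R (K : Type) [Field K] (d : ℕ) : Type := MvPolynomial (ι d) K

/-- The polynomial ring `S = K[u_1, …, u_{2d}, v'_1, …, v'_{2d}]`; the variable
`X (Sum.inl j)` is `u_j` and `X (Sum.inr j)` is `v'_j`. -/
abbrev S (K : Type) [Field K] (d : ℕ) : Type := MvPolynomial (ι d ⊕ ι d) K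

/-- The free `S`-module `M` with basis `a_1, …, a_{2d}`. -/
abbrev M (K : Type) [Field K] (d : ℕ) : Type := ι d → S K d

variable (K : Type) [Field K] (d : ℕ)

/-- The basis element `a_j` of `M`. -/
noncomputable def a (j : ι d) : M K d := Pi.single j 1

/-- `y_j ↦ u_j`. -/
noncomputable def lam : R K d →ₐ[K] S K d :=
  MvPolynomial.rename (Sum.inl : ι d → ι d ⊕ ι d)

/-- `y_j ↦ v'_j`. -/
noncomputable def rho : R K d →ₐ[K] S K d :=
  MvPolynomial.rename (Sum.inr : ι d → ι d ⊕ ι d)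

/-- The left `R`-action on `M`: `y_j` acts as scalar multiplication by `u_j`. -/
noncomputable instance : Module (R K d) (M K d) :=
  Module.compHom _ (lam K d).toRingHom

/-- The right `R`-action on `M`: `y_j` acts as scalar multiplication by `v'_j`. -/
noncomputable instance : Module (R K d)ᵐᵒᵖ (M K d) :=
  Module.compHom _ (RingHom.fromOpposite (rho K d).toRingHom fun _ _ => mul_comm _ _)

instance : SMulCommClass (R K d) (R K d)ᵐᵒᵖ (M K d) := by
  constructor
  intro r r' m
  show lam K d r • (rho K d r'.unop • m) = rho K d r'.unop • (lam K d r • m)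
  rw [smul_smul, smul_smul, mul_comm]

instance : IsScalarTower K (R K d) (M K d) := by
  constructor
  intro c r m
  show lam K d (c • r) • m = c • (lam K d r • m)
  rw [map_smul]
  exact smul_assoc c (lam K d r) m

instance : IsScalarTower K (R K d)ᵐᵒᵖ (M K d) := by
  constructor
  intro c r m
  show rho K d (c • r).unop • m = c • (rho K d r.unop • m)
  rw [MulOpposite.unop_smul, map_smul]
  exact smul_assoc c (rho K d r.unop) m

/-- The wreath product `W = R ⋉ M`, the trivial square-zero extension of `R` by the
`R`-bimodule `M`. -/
noncomputable abbrev W : Type := TrivSqZeroExt (R K d) (M K d)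

/-- The unique `K`-algebra homomorphism `ε : P → W` with `ε(x_j) = (y_j, a_j)`. -/
noncomputable def ε : P K d →ₐ[K] W K d :=
  FreeAlgebra.lift K fun j =>
    TrivSqZeroExt.inl (MvPolynomial.X j) + TrivSqZeroExt.inr (a K d j)

/-- `u_j ∈ S`. -/
noncomputable def u (j : ι d) : S K d := X (Sum.inl j)

/-- `v_j = v'_j - u_j ∈ S`. -/
noncomputable def v (j : ι d) : S K d := X (Sum.inr j) - X (Sum.inl j)

/-- The left-normed commutator `[f, g, z_1, …, z_n]`, with `[f,g] = fg - gf` and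
`[f,g,h] = [[f,g],h]`. -/
def lnc {A : Type} [Ring A] (f g : A) (l : List A) : A :=
  l.foldl (fun acc z => acc * z - z * acc) (f * g - g * f)

theorem eps_mul (j : ι d) (m : M K d) :
    ε K d (FreeAlgebra.ι K j) * TrivSqZeroExt.inr m = TrivSqZeroExt.inr (u K d j • m) := by
  have h : (X j : R K d) • m = u K d j • m := by
    show lam K d (X j) • m = _
    simp [lam, u]
  rw [ε, FreeAlgebra.lift_ι_apply, add_mul, TrivSqZeroExt.inl_mul_inr,
    TrivSqZeroExt.inr_mul_inr, add_zero, h]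

theorem mul_eps (j : ι d) (m : M K d) :
    TrivSqZeroExt.inr m * ε K d (FreeAlgebra.ι K j) =
      TrivSqZeroExt.inr ((X (Sum.inr j) : S K d) • m) := by
  have h : MulOpposite.op (X j : R K d) • m = (X (Sum.inr j) : S K d) • m := by
    show rho K d (X j) • m = _
    simp [rho]
  rw [ε, FreeAlgebra.lift_ι_apply, mul_add, TrivSqZeroExt.inr_mul_inl,
    TrivSqZeroExt.inr_mul_inr, add_zero, h]

theorem comm_eps (j : ι d) (m : M K d) :
    TrivSqZeroExt.inr m * ε K d (FreeAlgebra.ι K j) -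
      ε K d (FreeAlgebra.ι K j) * TrivSqZeroExt.inr m = TrivSqZeroExt.inr (v K d j • m) := by
  rw [eps_mul, mul_eps, ← TrivSqZeroExt.inr_sub, v, sub_smul, u]

theorem base_eps (i j : ι d) :
    ε K d (FreeAlgebra.ι K i * FreeAlgebra.ι K j - FreeAlgebra.ι K j * FreeAlgebra.ι K i) =
      TrivSqZeroExt.inr (v K d j • a K d i - v K d i • a K d j) := by
  have e : ∀ k, ε K d (FreeAlgebra.ι K k) =
      TrivSqZeroExt.inl (X k) + TrivSqZeroExt.inr (a K d k) := fun k => by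
    rw [ε, FreeAlgebra.lift_ι_apply]
  have c : (TrivSqZeroExt.inl (X i) * TrivSqZeroExt.inl (X j) : W K d) =
      TrivSqZeroExt.inl (X j) * TrivSqZeroExt.inl (X i) := by
    rw [← TrivSqZeroExt.inl_mul, ← TrivSqZeroExt.inl_mul, mul_comm]
  have z : ∀ p q : M K d, (TrivSqZeroExt.inr p * TrivSqZeroExt.inr q : W K d) = 0 :=
    fun p q => TrivSqZeroExt.inr_mul_inr _ _ _
  rw [TrivSqZeroExt.inr_sub, ← comm_eps, ← comm_eps, map_sub, map_mul, map_mul, e, e]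
  simp only [mul_add, add_mul, z, c]
  abel

theorem fold_eps (l : List (ι d)) : ∀ (p : P K d) (m : M K d),
    ε K d p = TrivSqZeroExt.inr m →
    ε K d ((l.map (FreeAlgebra.ι K)).foldl (fun acc z => acc * z - z * acc) p) =
      TrivSqZeroExt.inr ((l.map (v K d)).prod • m) := by
  induction l with
  | nil => intro p m h; simpa using h
  | cons k l ih =>
    intro p m h
    rw [List.map_cons, List.foldl_cons, ih _ (v K d k • m), List.map_cons, List.prod_cons,
      smul_smul, mul_comm]
    rw [map_sub, map_mul, map_mul, h, comm_eps]

theorem prod_eps (l : List (ι d)) (m : M K d) :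
    ε K d (l.map (FreeAlgebra.ι K)).prod * TrivSqZeroExt.inr m =
      TrivSqZeroExt.inr ((l.map (u K d)).prod • m) := by
  induction l with
  | nil => simp
  | cons k l ih =>
    rw [List.map_cons, List.prod_cons, map_mul, mul_assoc, ih, eps_mul, List.map_cons,
      List.prod_cons, smul_smul]

/-- `ε(x_{i_1} ⋯ x_{i_m} [x_i, x_j, x_{j_1}, …, x_{j_n}])
  = (0, (v_j·a_i - v_i·a_j)·v_{j_1} ⋯ v_{j_n}·u_{i_1} ⋯ u_{i_m})`. -/
theorem stmt5 [CharZero K] (hd : 1 ≤ d) (m n : ℕ)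
    (I : Fin m → ι d) (i j : ι d) (J : Fin n → ι d) :
    ε K d ((List.ofFn fun k => FreeAlgebra.ι K (I k)).prod *
        lnc (FreeAlgebra.ι K i) (FreeAlgebra.ι K j)
          (List.ofFn fun k => (FreeAlgebra.ι K (J k) : P K d))) =
      TrivSqZeroExt.inr
        (((∏ k : Fin n, v K d (J k)) * ∏ k : Fin m, u K d (I k)) •
          (v K d j • a K d i - v K d i • a K d j)) := by
  have hI : (List.ofFn fun k => (FreeAlgebra.ι K (I k) : P K d)) =
      (List.ofFn I).map (FreeAlgebra.ι K) := by rw [List.map_ofFn]; rfl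
  have hJ : (List.ofFn fun k => (FreeAlgebra.ι K (J k) : P K d)) =
      (List.ofFn J).map (FreeAlgebra.ι K) := by rw [List.map_ofFn]; rfl
  rw [hI, hJ, lnc, map_mul, fold_eps K d _ _ _ (base_eps K d i j), prod_eps, smul_smul,
    List.map_ofFn, List.map_ofFn, List.prod_ofFn, List.prod_ofFn, mul_comm]
  rfl

end Stmt5
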